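/- Let S be an inf-semilattice ordered Cu-semigroup satisfying (O5) and weak cancellation, let k ≥ 1, and let x ∈ S. Then: (a) if x is weakly (k,n)-divisible for some n ≥ 1, then x is (k,N)-divisible, where N = k(M−1)+1 and M = max{ n^r·(k−r) + n^{r−1} : r = 1, …, k } (so N depends only on k and n); (b) x is weakly (k,ω)-divisible if and only if x is (k,ω)-divisible. -/

import Mathlib

/-- The way-below (compact containment) relation on a partially ordered set:
`WayBelow x y` holds if whenever `(y n)` is an increasing sequence admitting a
supremum `s` with `y ≤ s`, then `x ≤ y n` for some `n`. -/
def WayBelow {S : Type*} [PartialOrder S] (x y : S) : Prop :=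
  ∀ f : ℕ → S, Monotone f → ∀ s : S, IsLUB (Set.range f) s → y ≤ s → ∃ n, x ≤ f n

/-- An abstract Cuntz semigroup (Cu-semigroup): a positively ordered commutative
monoid satisfying the axioms (O1)-(O4). -/
class CuSemigroup (S : Type*) [AddCommMonoid S] [PartialOrder S] : Prop where
  /-- The order is positive. -/
  zero_le : ∀ x : S, 0 ≤ x
  /-- Addition is order-preserving. -/
  add_le_add : ∀ {x y z w : S}, x ≤ y → z ≤ w → x + z ≤ y + w
  /-- (O1): every increasing sequence has a supremum. -/
  O1 : ∀ f : ℕ → S, Monotone f → ∃ s : S, IsLUB (Set.range f) s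
  /-- (O2): every element is the supremum of a `≪`-increasing sequence. -/
  O2 : ∀ x : S, ∃ f : ℕ → S, (∀ n, WayBelow (f n) (f (n + 1))) ∧ IsLUB (Set.range f) x
  /-- (O3): the way-below relation is additive. -/
  O3 : ∀ {x' x y' y : S}, WayBelow x' x → WayBelow y' y → WayBelow (x' + y') (x + y)
  /-- (O4): addition is compatible with suprema of increasing sequences. -/
  O4 : ∀ (f g : ℕ → S), Monotone f → Monotone g → ∀ a b : S,
        IsLUB (Set.range f) a → IsLUB (Set.range g) b →
        IsLUB (Set.range fun n => f n + g n) (a + b)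

/-- Axiom (O5) (almost algebraic order). -/
def O5 (S : Type*) [AddCommMonoid S] [PartialOrder S] : Prop :=
  ∀ x' x z : S, WayBelow x' x → x ≤ z → ∃ w : S, x' + w ≤ z ∧ z ≤ x + w

/-- Axiom (O6+). -/
def O6plus (S : Type*) [AddCommMonoid S] [PartialOrder S] : Prop :=
  ∀ a b c x' x y' y : S, a ≤ b + c →
    WayBelow x' x → x ≤ a → x ≤ b → WayBelow y' y → y ≤ a → y ≤ c →
    ∃ e f : S, a ≤ e + f ∧ WayBelow x' e ∧ e ≤ a ∧ e ≤ b ∧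
      WayBelow y' f ∧ f ≤ a ∧ f ≤ c

/-- Weak cancellation: `x + z ≪ y + z` implies `x ≪ y`. -/
def WeakCancel (S : Type*) [AddCommMonoid S] [PartialOrder S] : Prop :=
  ∀ x y z : S, WayBelow (x + z) (y + z) → WayBelow x y

/-- A Cu-semigroup is countably based if there is a countable subset `B` such that every
element is the supremum of a `≪`-increasing sequence with elements in `B`. -/
def CountablyBased (S : Type*) [AddCommMonoid S] [PartialOrder S] : Prop :=
  ∃ B : Set S, B.Countable ∧ ∀ x : S, ∃ f : ℕ → S, (∀ n, f n ∈ B) ∧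
    (∀ n, WayBelow (f n) (f (n + 1))) ∧ IsLUB (Set.range f) x

/-- Addition distributes over the infimum operation. -/
def InfDistrib (S : Type*) [AddCommMonoid S] [SemilatticeInf S] : Prop :=
  ∀ x y z : S, (x + z) ⊓ (y + z) = (x ⊓ y) + z

/-- A functional on an ordered monoid: a `[0,∞]`-valued map preserving `0`, addition,
order, and suprema of increasing sequences. -/
def IsFunctional {S : Type*} [AddCommMonoid S] [PartialOrder S] (l : S → ENNReal) : Prop :=
  l 0 = 0 ∧ (∀ x y : S, l (x + y) = l x + l y) ∧ (∀ x y : S, x ≤ y → l x ≤ l y) ∧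
    ∀ (f : ℕ → S) (s : S), Monotone f → IsLUB (Set.range f) s → l s = ⨆ n, l (f n)

/-- An element is soft if each of its way-below approximants `x'` satisfies
`(k+1)·x' ≤ k·x` for some `k`. -/
def Soft {S : Type*} [AddCommMonoid S] [PartialOrder S] (x : S) : Prop :=
  ∀ x' : S, WayBelow x' x → ∃ k : ℕ, (k + 1) • x' ≤ k • x

/-- An element `x` is full if `∞·x = sup_n n·x` exists and dominates every element. -/
def IsFull {S : Type*} [AddCommMonoid S] [PartialOrder S] (x : S) : Prop :=
  ∃ s : S, IsLUB (Set.range fun n : ℕ => n • x) s ∧ ∀ t : S, t ≤ s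

/-- `x` is `(k,n)`-divisible. -/
def Divisible {S : Type*} [AddCommMonoid S] [PartialOrder S] (k n : ℕ) (x : S) : Prop :=
  ∀ x' : S, WayBelow x' x → ∃ y : S, k • y ≤ x ∧ x' ≤ n • y

/-- `x` is `(k,ω)`-divisible. -/
def DivisibleOmega {S : Type*} [AddCommMonoid S] [PartialOrder S] (k : ℕ) (x : S) : Prop :=
  ∀ x' : S, WayBelow x' x → ∃ (y : S) (n : ℕ), k • y ≤ x ∧ x' ≤ n • y

/-- `x` is weakly `(k,n)`-divisible. -/
def WeaklyDivisible {S : Type*} [AddCommMonoid S] [PartialOrder S] (k n : ℕ) (x : S) :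
    Prop :=
  ∀ x' : S, WayBelow x' x → ∃ y : Fin n → S, (∀ j, k • y j ≤ x) ∧ x' ≤ ∑ j, y j

/-- `x` is weakly `(k,ω)`-divisible. -/
def WeaklyDivisibleOmega {S : Type*} [AddCommMonoid S] [PartialOrder S] (k : ℕ) (x : S) :
    Prop :=
  ∀ x' : S, WayBelow x' x → ∃ (n : ℕ) (y : Fin n → S), (∀ j, k • y j ≤ x) ∧ x' ≤ ∑ j, y j

/-!
Suppose `(m + 1) • y j ≤ R` for finitely many `y j`. By (O5) each `m • y j` has an approximate
complement `u j` in `R`, and weak cancellation gives `y j ≤ u j`, hence `R ≤ (m + 1) • u j`.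
As addition distributes over infima, `R` is also bounded by a multiple of `z = ⨅ j, u j`. Splitting
`z` off `R` leaves a remainder `Q` which, again by weak cancellation, still dominates every
`m • y j`, so the argument can be repeated with `Q` and `m`. The infimum of the elements split off
along the way is the required divisor. Since `∑ j, y j ≤ n • Q` for every remainder `Q`, the
multiplicities do not compound from one step to the next, and the resulting bound is quadratic in
both `k` and `n`.
-/

section Order

variable {S : Type*} [PartialOrder S] {x y z : S}

theorem WayBelow.le (h : WayBelow x y) : x ≤ y :=
  let ⟨_, hxy⟩ := h (fun _ => y) monotone_const y (by simp) le_rfl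
  hxy

theorem WayBelow.trans_le (hxy : WayBelow x y) (hyz : y ≤ z) : WayBelow x z :=
  fun f hf s hs hz => hxy f hf s hs (hyz.trans hz)

theorem WayBelow.of_le_of_wayBelow (hxy : x ≤ y) (hyz : WayBelow y z) : WayBelow x z :=
  fun f hf s hs hz => (hyz f hf s hs hz).imp fun _ => hxy.trans

end Order

section CuSemigroup

variable {S : Type*} [AddCommMonoid S] [PartialOrder S] [CuSemigroup S]

instance CuSemigroup.isOrderedAddMonoid : IsOrderedAddMonoid S where
  add_le_add_left _ _ h _ := CuSemigroup.add_le_add h le_rfl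

instance CuSemigroup.isBotZeroClass : IsBotZeroClass S where
  isBot_zero := CuSemigroup.zero_le

theorem CuSemigroup.exists_monotone_wayBelow_isLUB (x : S) :
    ∃ f : ℕ → S, Monotone f ∧ (∀ n, WayBelow (f n) x) ∧ IsLUB (Set.range f) x := by
  obtain ⟨f, hf, hx⟩ := CuSemigroup.O2 x
  exact ⟨f, monotone_nat_of_le_succ fun n => (hf n).le,
    fun n => (hf n).trans_le (hx.1 ⟨n + 1, rfl⟩), hx⟩

theorem WayBelow.exists_between {x y : S} (h : WayBelow x y) :
    ∃ w, WayBelow x w ∧ WayBelow w y := by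
  obtain ⟨f, hf, hy⟩ := CuSemigroup.O2 y
  obtain ⟨n, hn⟩ := h f (monotone_nat_of_le_succ fun n => (hf n).le) y hy le_rfl
  exact ⟨f (n + 1), .of_le_of_wayBelow hn (hf n), (hf (n + 1)).trans_le (hy.1 ⟨n + 2, rfl⟩)⟩

theorem zero_wayBelow (x : S) : WayBelow 0 x :=
  fun _ _ _ _ _ => ⟨0, zero_le⟩

theorem WayBelow.nsmul {x y : S} (h : WayBelow x y) (n : ℕ) : WayBelow (n • x) (n • y) := by
  induction n with
  | zero => simpa only [zero_nsmul] using zero_wayBelow 0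
  | succ n ih => simpa only [succ_nsmul] using CuSemigroup.O3 ih h

theorem CuSemigroup.isLUB_sum {ι : Type*} (t : Finset ι) {f : ι → ℕ → S} {a : ι → S}
    (hf : ∀ j ∈ t, Monotone (f j)) (ha : ∀ j ∈ t, IsLUB (Set.range (f j)) (a j)) :
    IsLUB (Set.range fun n => ∑ j ∈ t, f j n) (∑ j ∈ t, a j) := by
  induction t using Finset.cons_induction with
  | empty => simp
  | cons j t hj ih =>
    rw [Finset.forall_mem_cons] at hf ha
    simpa only [Finset.sum_cons] using
      CuSemigroup.O4 _ _ hf.1 (Monotone.finsetSum hf.2) _ _ ha.1 (ih hf.2 ha.2)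

theorem WayBelow.exists_wayBelow_sum {ι : Type*} {t : Finset ι} {s : S} {y : ι → S}
    (h : WayBelow s (∑ j ∈ t, y j)) :
    ∃ y' : ι → S, (∀ j, WayBelow (y' j) (y j)) ∧ WayBelow s (∑ j ∈ t, y' j) := by
  obtain ⟨r, hsr, hr⟩ := h.exists_between
  choose f hf hfy hlub using fun j => CuSemigroup.exists_monotone_wayBelow_isLUB (y j)
  obtain ⟨n, hn⟩ := hr _ (Monotone.finsetSum fun j _ => hf j) _
    (CuSemigroup.isLUB_sum t (fun j _ => hf j) fun j _ => hlub j) le_rfl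
  exact ⟨fun j => f j n, fun j => hfy j n, hsr.trans_le hn⟩

theorem WayBelow.exists_le_nsmul {s a : S} {n : ℕ} (h : WayBelow s (n • a)) :
    ∃ b, WayBelow b a ∧ s ≤ n • b := by
  obtain ⟨f, hf, hfa, hlub⟩ := CuSemigroup.exists_monotone_wayBelow_isLUB a
  have hlub_nsmul : IsLUB (Set.range fun i => n • f i) (n • a) := by
    simpa using CuSemigroup.isLUB_sum (Finset.range n) (fun _ _ => hf) fun _ _ => hlub
  obtain ⟨i, hi⟩ := h _ (hf.const_nsmul n) _ hlub_nsmul le_rfl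
  exact ⟨f i, hfa i, hi⟩

theorem WeakCancel.le_of_add_le_add (hwc : WeakCancel S) {a b c c' : S} (hc : WayBelow c' c)
    (h : a + c ≤ b + c') : a ≤ b := by
  obtain ⟨f, -, hfa, hlub⟩ := CuSemigroup.exists_monotone_wayBelow_isLUB a
  refine hlub.2 ?_
  rintro _ ⟨n, rfl⟩
  exact (hwc _ _ c' ((CuSemigroup.O3 (hfa n) hc).trans_le h)).le

end CuSemigroup

section InfDistrib

variable {S : Type*} [AddCommMonoid S] [SemilatticeInf S] {a b c : S}

theorem InfDistrib.isOrderedAddMonoid (hdist : InfDistrib S) : IsOrderedAddMonoid S where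
  add_le_add_left a b hab c := by
    rw [← inf_eq_left, hdist, inf_eq_left.2 hab]

theorem InfDistrib.le_nsmul_inf_add (hdist : InfDistrib S) {N : ℕ} {s : S}
    (h : ∀ i j, i + j = N → c ≤ i • a + j • b + s) : c ≤ N • (a ⊓ b) + s := by
  induction N generalizing s with
  | zero => simpa using h 0 0 rfl
  | succ N ih =>
    rw [succ_nsmul, add_assoc]
    refine ih fun i j hij => ?_
    rw [add_left_comm, ← hdist]
    refine le_inf ((h (i + 1) j (by lia)).trans_eq ?_) ((h i (j + 1) (by lia)).trans_eq ?_)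
    · rw [succ_nsmul]; abel
    · rw [succ_nsmul]; abel

variable [IsBotZeroClass S]

theorem InfDistrib.le_nsmul_inf (hdist : InfDistrib S) {p q r : ℕ} (hr : p + q ≤ r + 1)
    (ha : c ≤ p • a) (hb : c ≤ q • b) : c ≤ r • (a ⊓ b) := by
  have := hdist.isOrderedAddMonoid
  suffices ∀ i j, i + j = r → c ≤ i • a + j • b + 0 by simpa using hdist.le_nsmul_inf_add this
  intro i j hij
  rw [add_zero]
  obtain hi | hj : p ≤ i ∨ q ≤ j := by lia
  · exact (ha.trans (nsmul_le_nsmul_left zero_le hi)).trans (le_add_of_nonneg_right zero_le)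
  · exact (hb.trans (nsmul_le_nsmul_left zero_le hj)).trans (le_add_of_nonneg_left zero_le)

theorem InfDistrib.le_nsmul_finset_inf' (hdist : InfDistrib S) {ι : Type*} {t : Finset ι}
    (ht : t.Nonempty) {m : ℕ} {u : ι → S} (h : ∀ j ∈ t, c ≤ (m + 1) • u j) :
    c ≤ (t.card * m + 1) • t.inf' ht u := by
  induction ht using Finset.Nonempty.cons_induction with
  | singleton j => simpa using h
  | cons j t hj ht ih =>
    rw [Finset.inf'_cons ht, Finset.card_cons]
    exact hdist.le_nsmul_inf (by lia) (h j (t.mem_cons_self j))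
      (ih fun i hi => h i (Finset.mem_cons_of_mem hi))

end InfDistrib

section Splitting

variable {S : Type*} [AddCommMonoid S]

theorem exists_complement_of_succ_nsmul_le [PartialOrder S] [CuSemigroup S] (h5 : O5 S)
    (hwc : WeakCancel S) {m : ℕ} {y' y R : S} (hy' : WayBelow y' y) (hy : (m + 1) • y ≤ R) :
    ∃ u, m • y' + u ≤ R ∧ R ≤ (m + 1) • u := by
  obtain ⟨v, hy'v, hvy⟩ := hy'.exists_between
  have hvR : m • v ≤ R :=
    calc m • v ≤ m • y := nsmul_le_nsmul_right hvy.le m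
      _ ≤ (m + 1) • y := nsmul_le_nsmul_left zero_le m.le_succ
      _ ≤ R := hy
  obtain ⟨u, hu, hRu⟩ := h5 _ _ R (hy'v.nsmul m) hvR
  have hyu : y ≤ u := hwc.le_of_add_le_add (hvy.nsmul m) <|
    calc y + m • y = (m + 1) • y := (succ_nsmul' y m).symm
      _ ≤ m • v + u := hy.trans hRu
      _ = u + m • v := add_comm _ _
  refine ⟨u, hu, ?_⟩
  calc R ≤ m • v + u := hRu
    _ ≤ m • u + u := by gcongr; exact hvy.le.trans hyu
    _ = (m + 1) • u := (succ_nsmul u m).symm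

theorem exists_remainder_of_wayBelow [PartialOrder S] [CuSemigroup S] (h5 : O5 S)
    (hwc : WeakCancel S) {ι : Type*} [Nonempty ι] {v u : ι → S} {z' z R : S}
    (hvu : ∀ j, v j + u j ≤ R) (hz : ∀ j, z ≤ u j) (hz' : WayBelow z' z) :
    ∃ Q, z' + Q ≤ R ∧ ∀ j, v j ≤ Q := by
  obtain ⟨w, hz'w, hwz⟩ := hz'.exists_between
  have hwu (j : ι) : WayBelow w (u j) := hwz.trans_le (hz j)
  have hwR : w ≤ R :=
    have ⟨j⟩ := ‹Nonempty ι›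
    (hwu j).le.trans ((le_add_of_nonneg_left zero_le).trans (hvu j))
  obtain ⟨Q, hQ, hRQ⟩ := h5 z' w R hz'w hwR
  refine ⟨Q, hQ, fun j => hwc.le_of_add_le_add (hwu j) ?_⟩
  exact ((hvu j).trans hRQ).trans_eq (add_comm _ _)

variable [SemilatticeInf S] [CuSemigroup S] {ι : Type*} [Fintype ι]

theorem exists_split_of_succ_nsmul_le (hdist : InfDistrib S) (h5 : O5 S) (hwc : WeakCancel S)
    [Nonempty ι] {m C : ℕ} {R s : S} {y' y : ι → S} (hy' : ∀ j, WayBelow (y' j) (y j))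
    (hy : ∀ j, (m + 1) • y j ≤ R) (hs : WayBelow s (C • R)) :
    ∃ z Q, z + Q ≤ R ∧ s ≤ (C * (Fintype.card ι * m + 1)) • z ∧ ∀ j, m • y' j ≤ Q := by
  choose u hu hRu using fun j => exists_complement_of_succ_nsmul_le h5 hwc (hy' j) (hy j)
  let z₀ := Finset.univ.inf' Finset.univ_nonempty u
  have hRz₀ : R ≤ (Fintype.card ι * m + 1) • z₀ := hdist.le_nsmul_finset_inf' _ fun j _ => hRu j
  have hsz₀ : WayBelow s ((C * (Fintype.card ι * m + 1)) • z₀) := by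
    rw [mul_nsmul']
    exact hs.trans_le (nsmul_le_nsmul_right hRz₀ C)
  obtain ⟨z, hz, hsz⟩ := hsz₀.exists_le_nsmul
  obtain ⟨Q, hzQ, hQ⟩ :=
    exists_remainder_of_wayBelow h5 hwc hu (fun j => Finset.inf'_le u (Finset.mem_univ j)) hz
  exact ⟨z, Q, hzQ, hsz, hQ⟩

-- With `n = card ι`, the first split costs `C * (n * m + 1)`. All later ones have `C = n` and cost
-- `n * (n * i + 1)` for `i < m`, and each of the `m` infima saves one.
theorem exists_divisor_of_wayBelow_nsmul (hdist : InfDistrib S) (h5 : O5 S) (hwc : WeakCancel S)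
    [Nonempty ι] {m C : ℕ} {R s : S} {y : ι → S} (hy : ∀ j, (m + 1) • y j ≤ R)
    (hsR : WayBelow s (C • R)) (hsy : WayBelow s (∑ j, y j)) :
    ∃ w, (m + 1) • w ≤ R ∧
      s ≤ (C * (Fintype.card ι * m + 1) + (Fintype.card ι - 1) * m +
        Fintype.card ι ^ 2 * m.choose 2) • w := by
  induction m generalizing C R y with
  | zero => exact ⟨R, by simp, by simpa using hsR.le⟩
  | succ m ih =>
    obtain ⟨y', hy', hsy'⟩ := hsy.exists_wayBelow_sum
    obtain ⟨z, Q, hzQ, hsz, hyQ⟩ := exists_split_of_succ_nsmul_le hdist h5 hwc hy' hy hsR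
    have hsQ : WayBelow s (Fintype.card ι • Q) :=
      hsy'.trans_le <| Finset.sum_le_card_nsmul _ _ _ fun j _ =>
        (le_self_nsmul zero_le m.succ_ne_zero).trans (hyQ j)
    obtain ⟨w, hwQ, hsw⟩ := ih hyQ hsQ hsy'
    refine ⟨z ⊓ w, ?_, hdist.le_nsmul_inf ?_ hsz hsw⟩
    · calc (m + 1 + 1) • (z ⊓ w) = z ⊓ w + (m + 1) • (z ⊓ w) := succ_nsmul' _ _
        _ ≤ z + (m + 1) • w := by gcongr; exacts [inf_le_left, inf_le_right]
        _ ≤ R := (add_le_add_right hwQ z).trans hzQ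
    · obtain ⟨n, hn⟩ := Nat.exists_eq_add_of_le' (Fintype.card_pos (α := ι))
      rw [hn, Nat.choose_succ_succ' m 1, Nat.choose_one_right, Nat.add_sub_cancel]
      apply le_of_eq
      ring

theorem exists_divisor_of_wayBelow_sum (hdist : InfDistrib S) (h5 : O5 S) (hwc : WeakCancel S)
    {k : ℕ} (hk : 1 ≤ k) {x x' : S} {y : ι → S} (hx' : WayBelow x' x) (hy : ∀ j, k • y j ≤ x)
    (hx'y : WayBelow x' (∑ j, y j)) :
    ∃ w, k • w ≤ x ∧
      x' ≤ ((2 * Fintype.card ι - 1) * (k - 1) +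
        Fintype.card ι ^ 2 * (k - 1).choose 2 + 1) • w := by
  obtain ⟨m, rfl⟩ := Nat.exists_eq_add_of_le' hk
  cases isEmpty_or_nonempty ι with
  | inl _ => exact ⟨0, by simp, by simpa using hx'y.le⟩
  | inr _ =>
    obtain ⟨w, hwx, hx'w⟩ := exists_divisor_of_wayBelow_nsmul hdist h5 hwc (C := 1) hy
      (by rwa [one_nsmul]) hx'y
    refine ⟨w, hwx, hx'w.trans_eq ?_⟩
    obtain ⟨n, hn⟩ := Nat.exists_eq_add_of_le' (Fintype.card_pos (α := ι))
    rw [hn, Nat.add_sub_cancel, Nat.add_sub_cancel, show 2 * (n + 1) - 1 = 2 * n + 1 by lia]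
    congr 1
    ring

end Splitting

section Divisible

variable {S : Type*} [AddCommMonoid S] {k : ℕ} {x : S}

theorem Divisible.mono [PartialOrder S] [CuSemigroup S] {m n : ℕ} (hmn : m ≤ n)
    (h : Divisible k m x) : Divisible k n x := fun x' hx' =>
  (h x' hx').imp fun _ hy => ⟨hy.1, hy.2.trans (nsmul_le_nsmul_left zero_le hmn)⟩

theorem DivisibleOmega.weaklyDivisibleOmega [PartialOrder S] (h : DivisibleOmega k x) :
    WeaklyDivisibleOmega k x := fun x' hx' =>
  let ⟨y, n, hy, hx'y⟩ := h x' hx'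
  ⟨n, fun _ => y, fun _ => hy, by simpa using hx'y⟩

variable [SemilatticeInf S] [CuSemigroup S]

theorem WeaklyDivisible.divisible (hdist : InfDistrib S) (h5 : O5 S) (hwc : WeakCancel S)
    (hk : 1 ≤ k) {n : ℕ} (h : WeaklyDivisible k n x) :
    Divisible k ((2 * n - 1) * (k - 1) + n ^ 2 * (k - 1).choose 2 + 1) x := by
  intro x' hx'
  obtain ⟨x'', hx'x'', hx''⟩ := hx'.exists_between
  obtain ⟨y, hy, hx''y⟩ := h x'' hx''
  simpa only [Fintype.card_fin] using
    exists_divisor_of_wayBelow_sum hdist h5 hwc hk hx' hy (hx'x''.trans_le hx''y)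

theorem WeaklyDivisibleOmega.divisibleOmega (hdist : InfDistrib S) (h5 : O5 S)
    (hwc : WeakCancel S) (hk : 1 ≤ k) (h : WeaklyDivisibleOmega k x) : DivisibleOmega k x := by
  intro x' hx'
  obtain ⟨x'', hx'x'', hx''⟩ := hx'.exists_between
  obtain ⟨n, y, hy, hx''y⟩ := h x'' hx''
  obtain ⟨w, hw, hx'w⟩ :=
    exists_divisor_of_wayBelow_sum hdist h5 hwc hk hx' hy (hx'x''.trans_le hx''y)
  exact ⟨w, _, hw, hx'w⟩

end Divisible

theorem quadratic_bound_le_sup_bound {k : ℕ} (hk : 1 ≤ k) (n : ℕ) :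
    (2 * n - 1) * (k - 1) + n ^ 2 * (k - 1).choose 2 + 1 ≤
      k * (((Finset.Icc 1 k).sup fun r => n ^ r * (k - r) + n ^ (r - 1)) - 1) + 1 := by
  set M := (Finset.Icc 1 k).sup fun r => n ^ r * (k - r) + n ^ (r - 1)
  have le_M (r : ℕ) (hr : 1 ≤ r) (hrk : r ≤ k) : n ^ r * (k - r) + n ^ (r - 1) ≤ M :=
    Finset.le_sup (f := fun r => n ^ r * (k - r) + n ^ (r - 1)) (Finset.mem_Icc.2 ⟨hr, hrk⟩)
  obtain rfl | hk2 := hk.eq_or_lt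
  · simp
  obtain ⟨m, rfl⟩ := Nat.exists_eq_add_of_le' hk2
  have first_le : n * (m + 1) ≤ M - 1 := Nat.le_sub_one_of_lt (by simpa using le_M 1 le_rfl hk)
  have second_le : n ^ 2 * m + (n - 1) ≤ M - 1 := by
    have : n ^ 2 * m + n ≤ M := by simpa using le_M 2 one_le_two hk2
    obtain rfl | hn := n.eq_zero_or_pos
    · simp
    · lia
  have choose_le : (m + 1).choose 2 ≤ (m + 1) * m := by
    simpa [Nat.choose_two_right] using Nat.div_le_self _ _
  gcongr ?_ + 1
  calc (2 * n - 1) * (m + 1) + n ^ 2 * (m + 1).choose 2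
      ≤ (n + (n - 1)) * (m + 1) + n ^ 2 * ((m + 1) * m) := by gcongr; lia
    _ = n * (m + 1) + (m + 1) * (n ^ 2 * m + (n - 1)) := by ring
    _ ≤ (M - 1) + (m + 1) * (M - 1) := by gcongr
    _ = (m + 2) * (M - 1) := by ring

theorem divisible_iff_weaklyDivisible_general {S : Type*} [AddCommMonoid S]
    [SemilatticeInf S] [CuSemigroup S] (hdist : InfDistrib S)
    (h5 : O5 S) (hwc : WeakCancel S) (k : ℕ) (hk : 1 ≤ k) (x : S) :
    (∀ n : ℕ, WeaklyDivisible k n x →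
      Divisible k ((2 * n - 1) * (k - 1) + n ^ 2 * (k - 1).choose 2 + 1) x) ∧
    (WeaklyDivisibleOmega k x ↔ DivisibleOmega k x) :=
  ⟨fun _ h => h.divisible hdist h5 hwc hk,
    fun h => h.divisibleOmega hdist h5 hwc hk, DivisibleOmega.weaklyDivisibleOmega⟩

/-- In an inf-semilattice ordered Cu-semigroup with (O5) and weak cancellation:
(a) a weakly `(k,n)`-divisible element is `(k,N)`-divisible with
`N = k(M−1)+1`, `M = max {n^r(k−r)+n^(r−1) : r = 1,…,k}` (depending only on `k,n`);
(b) an element is weakly `(k,ω)`-divisible iff it is `(k,ω)`-divisible. -/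
theorem divisible_iff_weaklyDivisible {S : Type*} [AddCommMonoid S]
    [SemilatticeInf S] [CuSemigroup S] (hdist : InfDistrib S)
    (h5 : O5 S) (hwc : WeakCancel S) (k : ℕ) (hk : 1 ≤ k) (x : S) :
    (∀ n : ℕ, 1 ≤ n → WeaklyDivisible k n x →
      Divisible k
        (k * (((Finset.Icc 1 k).sup fun r => n ^ r * (k - r) + n ^ (r - 1)) - 1) + 1) x) ∧
    (WeaklyDivisibleOmega k x ↔ DivisibleOmega k x) := by
  have ⟨divisible, omega_iff⟩ := divisible_iff_weaklyDivisible_general hdist h5 hwc k hk x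
  exact ⟨fun n _ h => (divisible n h).mono (quadratic_bound_le_sup_bound hk n), omega_iff⟩
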